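/- Let κ = 1/2 and let (u, v) be a classical solution of the quadratic NLS system on an open interval I. Let a ∈ C^∞(ℝ⁶; ℝ) be such that a and all its derivatives grow at most polynomially. Then for all t ∈ I, (d²/dt²) ∫_{ℝ⁶} (|u|² + |v|²) a(x) dx = 4·Re ∫_{ℝ⁶} Σ_{j,k=1}^{6} (∂_j conj(u) ∂_k u + (1/4) ∂_j conj(v) ∂_k v) ∂_j∂_k a(x) dx − ∫_{ℝ⁶} (|u|² + (1/4)|v|²) Δ²a(x) dx − Re ∫_{ℝ⁶} conj(v)·u² · Δa(x) dx. -/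

import Mathlib

open MeasureTheory Real Filter

noncomputable section

/-- Six-dimensional Euclidean space. -/
abbrev E6 := EuclideanSpace ℝ (Fin 6)

/-- Partial derivative of a complex-valued function in the `j`-th coordinate direction. -/
def pd (f : E6 → ℂ) (j : Fin 6) (x : E6) : ℂ := fderiv ℝ f x (EuclideanSpace.single j 1)

/-- Laplacian of a complex-valued function on `ℝ⁶`. -/
def lap (f : E6 → ℂ) (x : E6) : ℂ :=
  ∑ j : Fin 6, fderiv ℝ (fun y => pd f j y) x (EuclideanSpace.single j 1)

/-- Partial derivative of a real-valued function in the `j`-th coordinate direction. -/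
def pdR (f : E6 → ℝ) (j : Fin 6) (x : E6) : ℝ := fderiv ℝ f x (EuclideanSpace.single j 1)

/-- Laplacian of a real-valued function on `ℝ⁶`. -/
def lapR (f : E6 → ℝ) (x : E6) : ℝ :=
  ∑ j : Fin 6, fderiv ℝ (fun y => pdR f j y) x (EuclideanSpace.single j 1)

/-- `|∇f(x)|²`, the squared length of the gradient. -/
def gradNormSq (f : E6 → ℂ) (x : E6) : ℝ := ∑ j : Fin 6, ‖pd f j x‖ ^ 2

/-- Kinetic energy `H(u,v) = ∫|∇u|² + (κ/2)∫|∇v|²`. -/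
def Hen (κ : ℝ) (u v : E6 → ℂ) : ℝ :=
  (∫ x : E6, gradNormSq u x) + (κ / 2) * ∫ x : E6, gradNormSq v x

/-- Potential energy `R(u,v) = Re ∫ conj(v) u²`. -/
def Ren (u v : E6 → ℂ) : ℝ := (∫ x : E6, (starRingEnd ℂ) (v x) * (u x) ^ 2).re

/-- Energy `E(u,v) = H(u,v) − R(u,v)`. -/
def Een (κ : ℝ) (u v : E6 → ℂ) : ℝ := Hen κ u v - Ren u v

/-- Mass `M(u,v) = ∫|u|² + ∫|v|²`. -/
def Mass (u v : E6 → ℂ) : ℝ := (∫ x : E6, ‖u x‖ ^ 2) + ∫ x : E6, ‖v x‖ ^ 2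

/-- `j`-th component of the momentum `P(u,v) = Im ∫ (conj(u)∇u + (1/2)conj(v)∇v)`. -/
def Pmom (u v : E6 → ℂ) (j : Fin 6) : ℝ :=
  (∫ x : E6, (starRingEnd ℂ) (u x) * pd u j x
    + (1 / 2 : ℂ) * (starRingEnd ℂ) (v x) * pd v j x).im

/-- The explicit profile `φ₀(x) = √κ (1 + |x|²/24)⁻²`. -/
def phi0 (κ : ℝ) (x : E6) : ℝ := Real.sqrt κ * ((1 + ‖x‖ ^ 2 / 24) ^ 2)⁻¹

/-- First component of the ground state `W`. -/
def W1 (κ : ℝ) (x : E6) : ℂ := (phi0 κ x : ℂ)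

/-- Second component of the ground state `W`, namely `φ₀/√κ`. -/
def W2 (κ : ℝ) (x : E6) : ℂ := ((phi0 κ x / Real.sqrt κ : ℝ) : ℂ)

/-- A function is Schwartz: smooth with all seminorms `sup ‖x‖^k ‖D^n f‖` finite. -/
def IsSchwartz (f : E6 → ℂ) : Prop :=
  ContDiff ℝ (⊤ : ℕ∞) f ∧ ∀ k n : ℕ, ∃ C : ℝ, ∀ x : E6, ‖x‖ ^ k * ‖iteratedFDeriv ℝ n f x‖ ≤ C

/-- A classical solution of the quadratic NLS system
`i∂ₜu + Δu + v conj(u) = 0`, `i∂ₜv + κΔv + u² = 0` on a time set `I`,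
with Schwartz slices whose seminorms are bounded locally uniformly in `t`. -/
structure IsClassicalSol (κ : ℝ) (I : Set ℝ) (u v : ℝ → E6 → ℂ) : Prop where
  smooth : ContDiffOn ℝ (⊤ : ℕ∞) (fun p : ℝ × E6 => (u p.1 p.2, v p.1 p.2)) (I ×ˢ Set.univ)
  eqn_u : ∀ t ∈ I, ∀ x : E6,
    Complex.I * deriv (fun s => u s x) t + lap (u t) x
      + v t x * (starRingEnd ℂ) (u t x) = 0
  eqn_v : ∀ t ∈ I, ∀ x : E6,
    Complex.I * deriv (fun s => v s x) t + (κ : ℂ) * lap (v t) x + (u t x) ^ 2 = 0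
  schwartz_u : ∀ t ∈ I, IsSchwartz (u t)
  schwartz_v : ∀ t ∈ I, IsSchwartz (v t)
  bounds : ∀ K : Set ℝ, K ⊆ I → IsCompact K → ∀ k n : ℕ, ∃ C : ℝ, ∀ t ∈ K, ∀ x : E6,
    ‖x‖ ^ k * ‖iteratedFDeriv ℝ n (u t) x‖ ≤ C ∧ ‖x‖ ^ k * ‖iteratedFDeriv ℝ n (v t) x‖ ≤ C

/-- Second partial derivative `∂_j ∂_k a` of a real-valued function. -/
def pd2R (a : E6 → ℝ) (j k : Fin 6) (x : E6) : ℝ :=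
  fderiv ℝ (fun y => pdR a k y) x (EuclideanSpace.single j 1)


open scoped ContDiff

def SB (K : Set ℝ) (F : ℝ → E6 → ℂ) : Prop :=
  (∀ t ∈ K, ContDiff ℝ ∞ (F t)) ∧
    ∀ k n : ℕ, ∃ C : ℝ, ∀ t ∈ K, ∀ x : E6, ‖x‖ ^ k * ‖iteratedFDeriv ℝ n (F t) x‖ ≤ C

def TF (K : Set ℝ) (F : ℝ → E6 → ℂ) : Prop :=
  (∀ t ∈ K, ContDiff ℝ ∞ (F t)) ∧
    ∀ n : ℕ, ∃ (k : ℕ) (C : ℝ), 0 ≤ C ∧ ∀ t ∈ K, ∀ x : E6,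
      ‖iteratedFDeriv ℝ n (F t) x‖ ≤ C * (1 + ‖x‖) ^ k

theorem SB.toTF {K F} (h : SB K F) : TF K F := by
  refine ⟨h.1, fun n => ?_⟩
  obtain ⟨C, hC⟩ := h.2 0 n
  refine ⟨0, max C 0, le_max_right _ _, fun t ht x => ?_⟩
  have := hC t ht x
  simp only [pow_zero, one_mul, mul_one] at *
  exact this.trans (le_max_left _ _)

theorem TF.of {K : Set ℝ} {A : E6 → ℂ} (h : Function.HasTemperateGrowth A) : TF K (fun _ => A) := by
  refine ⟨fun t _ => h.1, fun n => ?_⟩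
  obtain ⟨k, C, hC⟩ := h.2 n
  refine ⟨k, max C 0, le_max_right _ _, fun t ht x => (hC x).trans ?_⟩
  gcongr
  exact le_max_left _ _

theorem contDiff_pd {f : E6 → ℂ} (h : ContDiff ℝ ∞ f) (j : Fin 6) : ContDiff ℝ ∞ (pd f j) := by
  unfold pd
  exact (h.fderiv_right (m := ∞) (by simp)).clm_apply contDiff_const

theorem norm_iter_pd {f : E6 → ℂ} (h : ContDiff ℝ ∞ f) (j : Fin 6) (n : ℕ) (x : E6) :
    ‖iteratedFDeriv ℝ n (pd f j) x‖ ≤ ‖iteratedFDeriv ℝ (n + 1) f x‖ := by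
  have h1 : ContDiff ℝ ∞ (fderiv ℝ f) := h.fderiv_right (m := ∞) (by simp)
  have := norm_iteratedFDeriv_clm_apply_const (c := (EuclideanSpace.single j (1:ℝ) : E6)) (x := x)
    (n := n) h1.contDiffAt (by exact_mod_cast le_top)
  rw [norm_iteratedFDeriv_fderiv] at this
  have e : ‖(EuclideanSpace.single j (1:ℝ) : E6)‖ = 1 := by simp
  rw [e, one_mul] at this
  exact this

theorem SB.pd {K F} (h : SB K F) (j : Fin 6) : SB K (fun t => pd (F t) j) := by
  refine ⟨fun t ht => contDiff_pd (h.1 t ht) j, fun k n => ?_⟩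
  obtain ⟨C, hC⟩ := h.2 k (n + 1)
  refine ⟨C, fun t ht x => le_trans ?_ (hC t ht x)⟩
  gcongr
  exact norm_iter_pd (h.1 t ht) j n x

theorem TF.pd {K F} (h : TF K F) (j : Fin 6) : TF K (fun t => pd (F t) j) := by
  refine ⟨fun t ht => contDiff_pd (h.1 t ht) j, fun n => ?_⟩
  obtain ⟨k, C, h0, hC⟩ := h.2 (n + 1)
  exact ⟨k, C, h0, fun t ht x => le_trans (norm_iter_pd (h.1 t ht) j n x) (hC t ht x)⟩

theorem SB.conj {K F} (h : SB K F) : SB K (fun t x => (starRingEnd ℂ) (F t x)) := by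
  refine ⟨fun t ht => ?_, fun k n => ?_⟩
  · exact Complex.conjCLE.contDiff.comp (h.1 t ht)
  obtain ⟨C, hC⟩ := h.2 k n
  refine ⟨C, fun t ht x => ?_⟩
  have := Complex.conjLIE.norm_iteratedFDeriv_comp_left (𝕜 := ℝ) (F t) x n
  show ‖x‖ ^ k * ‖iteratedFDeriv ℝ n (Complex.conjLIE ∘ (F t)) x‖ ≤ C
  rw [this]
  exact hC t ht x

theorem SB.add {K F G} (h : SB K F) (h' : SB K G) : SB K (fun t x => F t x + G t x) := by
  refine ⟨fun t ht => (h.1 t ht).add (h'.1 t ht), fun k n => ?_⟩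
  obtain ⟨C, hC⟩ := h.2 k n
  obtain ⟨C', hC'⟩ := h'.2 k n
  refine ⟨C + C', fun t ht x => ?_⟩
  have e := iteratedFDeriv_add_apply (x := x) (i := n)
    ((h.1 t ht).contDiffAt.of_le (by exact_mod_cast le_top))
    ((h'.1 t ht).contDiffAt.of_le (by exact_mod_cast le_top))
  show ‖x‖ ^ k * ‖iteratedFDeriv ℝ n (F t + G t) x‖ ≤ C + C'
  rw [e]
  calc _ ≤ ‖x‖ ^ k * (‖iteratedFDeriv ℝ n (F t) x‖ + ‖iteratedFDeriv ℝ n (G t) x‖) := by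
        gcongr; exact norm_add_le _ _
    _ ≤ _ := by rw [mul_add]; exact add_le_add (hC t ht x) (hC' t ht x)

theorem SB.japanese {K F} (h : SB K F) (k n : ℕ) : ∃ C : ℝ, 0 ≤ C ∧ ∀ t ∈ K, ∀ x : E6,
    (1 + ‖x‖) ^ k * ‖iteratedFDeriv ℝ n (F t) x‖ ≤ C := by
  obtain ⟨C, hC⟩ := h.2 k n
  obtain ⟨C', hC'⟩ := h.2 0 n
  refine ⟨max (2 ^ k * (C + C')) 0, le_max_right _ _, fun t ht x => le_trans ?_ (le_max_left _ _)⟩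
  have h1 := hC t ht x
  have h2 := hC' t ht x
  have h3 : (1 + ‖x‖) ^ k ≤ 2 ^ k * (‖x‖ ^ k + 1) := by
    rcases le_total ‖x‖ 1 with hx | hx
    · calc (1 + ‖x‖) ^ k ≤ 2 ^ k := by gcongr; linarith
        _ ≤ _ := by
          have : 0 ≤ ‖x‖ ^ k := by positivity
          have : (0:ℝ) < 2 ^ k := by positivity
          nlinarith
    · calc (1 + ‖x‖) ^ k ≤ (2 * ‖x‖) ^ k := by gcongr; linarith
        _ = 2 ^ k * ‖x‖ ^ k := mul_pow _ _ _
        _ ≤ _ := by gcongr; linarith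
  calc _ ≤ (2 ^ k * (‖x‖ ^ k + 1)) * ‖iteratedFDeriv ℝ n (F t) x‖ := by gcongr
    _ = 2 ^ k * (‖x‖ ^ k * ‖iteratedFDeriv ℝ n (F t) x‖
        + ‖x‖ ^ 0 * ‖iteratedFDeriv ℝ n (F t) x‖) := by ring
    _ ≤ _ := by gcongr

theorem SB.mulTF {K F G} (h : SB K F) (h' : TF K G) : SB K (fun t x => F t x * G t x) := by
  refine ⟨fun t ht => (h.1 t ht).mul (h'.1 t ht), fun k n => ?_⟩
  choose m D hD0 hD using h'.2
  choose C hC0 hC using h.japanese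
  refine ⟨∑ i ∈ Finset.range (n + 1), (n.choose i : ℝ) * C (k + m (n - i)) i * D (n - i),
    fun t ht x => ?_⟩
  calc _ ≤ ‖x‖ ^ k * ∑ i ∈ Finset.range (n + 1),
      (n.choose i : ℝ) * ‖iteratedFDeriv ℝ i (F t) x‖ * ‖iteratedFDeriv ℝ (n - i) (G t) x‖ := by
        gcongr
        exact norm_iteratedFDeriv_mul_le (h.1 t ht) (h'.1 t ht) x (by exact_mod_cast le_top)
    _ = ∑ i ∈ Finset.range (n + 1), ‖x‖ ^ k *
      ((n.choose i : ℝ) * ‖iteratedFDeriv ℝ i (F t) x‖ * ‖iteratedFDeriv ℝ (n - i) (G t) x‖) :=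
        Finset.mul_sum _ _ _
    _ ≤ _ := by
      refine Finset.sum_le_sum fun i _ => ?_
      calc _ ≤ (1 + ‖x‖) ^ k * ((n.choose i : ℝ) * ‖iteratedFDeriv ℝ i (F t) x‖ *
            (D (n - i) * (1 + ‖x‖) ^ (m (n - i)))) := by
            gcongr
            · linarith
            · exact hD _ t ht x
        _ = (n.choose i : ℝ) * ((1 + ‖x‖) ^ (k + m (n - i)) * ‖iteratedFDeriv ℝ i (F t) x‖)
            * D (n - i) := by rw [pow_add]; ring
        _ ≤ _ := by
            have := hD0 (n - i)
            gcongr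
            exact hC _ _ t ht x

theorem SB.mul {K F G} (h : SB K F) (h' : SB K G) : SB K (fun t x => F t x * G t x) :=
  h.mulTF h'.toTF

theorem SB.cmul {K F} (h : SB K F) (c : ℂ) : SB K (fun t x => c * F t x) := by
  have := h.mulTF (TF.of (K := K) (Function.HasTemperateGrowth.const (E := E6) c))
  simpa [mul_comm] using this

theorem SB.neg {K F} (h : SB K F) : SB K (fun t x => - F t x) := by
  simpa using h.cmul (-1)

theorem SB.sub {K F G} (h : SB K F) (h' : SB K G) : SB K (fun t x => F t x - G t x) := by
  simpa [sub_eq_add_neg] using h.add h'.neg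

theorem SB.zero {K} : SB K (fun _ _ => 0) := by
  refine ⟨fun t _ => contDiff_const, fun k n => ⟨0, fun t _ x => ?_⟩⟩
  have : iteratedFDeriv ℝ n (fun _ : E6 => (0:ℂ)) x = 0 := by
    have := iteratedFDeriv_fun_zero (𝕜 := ℝ) (E := E6) (F := ℂ) (n := n)
    exact congrFun this x
  simp [this]

theorem SB.sum {K} {F : Fin 6 → ℝ → E6 → ℂ} (h : ∀ j, SB K (F j)) :
    SB K (fun t x => ∑ j, F j t x) := by
  have : ∀ s : Finset (Fin 6), SB K (fun t x => ∑ j ∈ s, F j t x) := by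
    intro s
    induction s using Finset.induction_on with
    | empty => simpa using SB.zero
    | insert a s ha ih => simpa [Finset.sum_insert ha] using (h a).add ih
  exact this _

theorem SB.lap {K F} (h : SB K F) : SB K (fun t => lap (F t)) :=
  SB.sum (F := fun j t x => _root_.pd (_root_.pd (F t) j) j x) fun j => (h.pd j).pd j

theorem jap_integrable : Integrable (fun x : E6 => (1 + ‖x‖) ^ (-7 : ℝ)) := by
  apply integrable_one_add_norm
  simp; norm_num

theorem SB.bound {K F} (h : SB K F) : ∃ C : ℝ, ∀ t ∈ K, ∀ x : E6,
    ‖F t x‖ ≤ C * (1 + ‖x‖) ^ (-7 : ℝ) := by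
  obtain ⟨C, hC0, hC⟩ := h.japanese 7 0
  refine ⟨C, fun t ht x => ?_⟩
  have h1 := hC t ht x
  have h0 : 0 < 1 + ‖x‖ := by positivity
  rw [norm_iteratedFDeriv_zero] at h1
  rw [Real.rpow_neg h0.le, ← div_eq_mul_inv, le_div_iff₀ (by positivity)]
  have : (1 + ‖x‖) ^ (7:ℝ) = (1 + ‖x‖) ^ (7:ℕ) := by
    rw [← Real.rpow_natCast]; norm_num
  rw [this, mul_comm]; exact h1

theorem SB.integrable {K F} (h : SB K F) {t} (ht : t ∈ K) : Integrable (F t) := by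
  obtain ⟨C, hC⟩ := h.bound
  exact (jap_integrable.const_mul C).mono' (h.1 t ht).continuous.aestronglyMeasurable
    (Eventually.of_forall (hC t ht))

theorem SB.integral_pd {K F} (h : SB K F) {t} (ht : t ∈ K) (j : Fin 6) :
    ∫ x, _root_.pd (F t) j x = 0 := by
  have := integral_bilinear_hasFDerivAt_right_eq_neg_left_of_integrable (μ := volume)
    (f := fun _ : E6 => (1:ℂ)) (f' := fun _ => 0) (g := F t) (g' := fderiv ℝ (F t))
    (v := EuclideanSpace.single j (1:ℝ)) (B := ContinuousLinearMap.mul ℝ ℂ)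
    (by simp) (by simp only [ContinuousLinearMap.mul_apply', one_mul]; exact (h.pd j).integrable ht) (by simpa using h.integrable ht)
    (fun x _ => hasFDerivAt_const _ _)
    (fun x _ => ((h.1 t ht).differentiable (by simp) x).hasFDerivAt)
  simpa [_root_.pd] using this

theorem SB.hasDerivAt {K F F'} (h : SB K F) (h' : SB K F') {t} (ht : K ∈ nhds t)
    (hd : ∀ s ∈ K, ∀ x, HasDerivAt (fun s => F s x) (F' s x) s) :
    HasDerivAt (fun s => ∫ x, F s x) (∫ x, F' t x) t := by
  obtain ⟨C, hC⟩ := h'.bound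
  have htK := mem_of_mem_nhds ht
  refine (hasDerivAt_integral_of_dominated_loc_of_deriv_le (s := K) (F := F) (F' := F')
    (bound := fun x => C * (1 + ‖x‖) ^ (-7 : ℝ)) ht ?_ (h.integrable htK)
    (h'.integrable htK).1 ?_ (jap_integrable.const_mul C) ?_).2
  · filter_upwards [ht] with s hs using (h.integrable hs).1
  · exact Eventually.of_forall fun x s hs => hC s hs x
  · exact Eventually.of_forall fun x s hs => hd s hs x

attribute [fun_prop] contDiff_pd

theorem pd_mul {f g : E6 → ℂ} (hf : ContDiff ℝ ∞ f) (hg : ContDiff ℝ ∞ g) (j : Fin 6) (x : E6) :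
    pd (fun y => f y * g y) j x = pd f j x * g x + f x * pd g j x := by
  have h1 := hf.differentiable (by simp) x
  have h2 := hg.differentiable (by simp) x
  unfold pd
  rw [fderiv_fun_mul h1 h2]
  simp; ring

theorem pd_add {f g : E6 → ℂ} (hf : ContDiff ℝ ∞ f) (hg : ContDiff ℝ ∞ g) (j : Fin 6) (x : E6) :
    pd (fun y => f y + g y) j x = pd f j x + pd g j x := by
  have h1 := hf.differentiable (by simp) x
  have h2 := hg.differentiable (by simp) x
  unfold pd
  rw [fderiv_fun_add h1 h2]
  simp

theorem pd_sub {f g : E6 → ℂ} (hf : ContDiff ℝ ∞ f) (hg : ContDiff ℝ ∞ g) (j : Fin 6) (x : E6) :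
    pd (fun y => f y - g y) j x = pd f j x - pd g j x := by
  have h1 := hf.differentiable (by simp) x
  have h2 := hg.differentiable (by simp) x
  unfold pd
  rw [fderiv_fun_sub h1 h2]
  simp

theorem pd_const (c : ℂ) (j : Fin 6) (x : E6) : pd (fun _ => c) j x = 0 := by
  simp [pd]

theorem pd_sum {f : Fin 6 → E6 → ℂ} (hf : ∀ i, ContDiff ℝ ∞ (f i)) (j : Fin 6) (x : E6) :
    pd (fun y => ∑ i, f i y) j x = ∑ i, pd (f i) j x := by
  unfold pd
  rw [fderiv_fun_sum (fun i _ => (hf i).differentiable (by simp) x)]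
  simp

theorem pd_conj {f : E6 → ℂ} (hf : ContDiff ℝ ∞ f) (j : Fin 6) (x : E6) :
    pd (fun y => (starRingEnd ℂ) (f y)) j x = (starRingEnd ℂ) (pd f j x) := by
  have h1 := (hf.differentiable (by simp) x).hasFDerivAt
  have h2 := (Complex.conjCLE.hasFDerivAt (x := f x)).comp x h1
  have h3 : (fun y => (starRingEnd ℂ) (f y)) = Complex.conjCLE ∘ f := rfl
  unfold pd
  rw [h3, h2.fderiv]
  simp

theorem pd_conj' {f : E6 → ℂ} (hf : ContDiff ℝ ∞ f) (j : Fin 6) :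
    pd (fun y => (starRingEnd ℂ) (f y)) j = fun x => (starRingEnd ℂ) (pd f j x) :=
  funext (pd_conj hf j)

theorem lap_eq (f : E6 → ℂ) (x : E6) : lap f x = ∑ j, pd (pd f j) j x := rfl

theorem lap_conj {f : E6 → ℂ} (hf : ContDiff ℝ ∞ f) (x : E6) :
    lap (fun y => (starRingEnd ℂ) (f y)) x = (starRingEnd ℂ) (lap f x) := by
  simp only [lap_eq, map_sum, pd_conj' hf, pd_conj (contDiff_pd hf _)]

theorem pd_comm {f : E6 → ℂ} (hf : ContDiff ℝ ∞ f) (j k : Fin 6) (x : E6) :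
    pd (pd f j) k x = pd (pd f k) j x := by
  have hs : IsSymmSndFDerivAt ℝ f x := hf.contDiffAt.isSymmSndFDerivAt (by
    rw [minSmoothness_of_isRCLikeNormedField]
    have : ((2 : ℕ) : WithTop ℕ∞) ≤ ∞ := WithTop.coe_le_coe.2 le_top
    exact this)
  have h1 : DifferentiableAt ℝ (fderiv ℝ f) x :=
    (hf.fderiv_right (m := ∞) (by simp)).differentiable (by simp) x
  have h2 : ∀ i l : Fin 6, pd (pd f i) l x
      = fderiv ℝ (fderiv ℝ f) x (EuclideanSpace.single l 1) (EuclideanSpace.single i 1) := by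
    intro i l
    have := (h1.hasFDerivAt.clm_apply
      (hasFDerivAt_const (EuclideanSpace.single i (1:ℝ) : E6) x)).fderiv
    show fderiv ℝ (fun y => fderiv ℝ f y (EuclideanSpace.single i 1)) x _ = _
    rw [this]; simp
  rw [h2, h2, hs.eq]

theorem pd_ofReal {a : E6 → ℝ} (ha : ContDiff ℝ ∞ a) (j : Fin 6) :
    pd (fun y => (a y : ℂ)) j = fun x => ((pdR a j x : ℝ) : ℂ) := by
  funext x
  have h1 := (ha.differentiable (by simp) x).hasFDerivAt
  have h2 := (Complex.ofRealCLM.hasFDerivAt (x := a x)).comp x h1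
  have h3 : (fun y => ((a y : ℝ) : ℂ)) = Complex.ofRealCLM ∘ a := rfl
  unfold pd pdR
  rw [h3, h2.fderiv]
  simp

theorem contDiff_pdR {f : E6 → ℝ} (h : ContDiff ℝ ∞ f) (j : Fin 6) : ContDiff ℝ ∞ (pdR f j) := by
  unfold pdR
  exact (h.fderiv_right (m := ∞) (by simp)).clm_apply contDiff_const

theorem contDiff_lapR {f : E6 → ℝ} (h : ContDiff ℝ ∞ f) : ContDiff ℝ ∞ (lapR f) := by
  have : lapR f = fun x => ∑ j, pdR (pdR f j) j x := rfl
  rw [this]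
  exact ContDiff.sum fun j _ => contDiff_pdR (contDiff_pdR h j) j

theorem lap_ofReal {a : E6 → ℝ} (ha : ContDiff ℝ ∞ a) :
    lap (fun y => (a y : ℂ)) = fun x => ((lapR a x : ℝ) : ℂ) := by
  funext x
  have : lapR a x = ∑ j, pdR (pdR a j) j x := rfl
  simp only [lap_eq, this, pd_ofReal ha, pd_ofReal (contDiff_pdR ha _)]
  push_cast; rfl

theorem slice_t {I : Set ℝ} (hI : IsOpen I) {F : ℝ → E6 → ℂ}
    (hF : ContDiffOn ℝ ∞ (fun p : ℝ × E6 => F p.1 p.2) (I ×ˢ Set.univ)) {t} (ht : t ∈ I) (x : E6) :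
    HasDerivAt (fun s => F s x) (fderiv ℝ (fun p : ℝ × E6 => F p.1 p.2) (t, x) (1, 0)) t := by
  have hc : ContDiffAt ℝ ∞ (fun p : ℝ × E6 => F p.1 p.2) (t, x) :=
    hF.contDiffAt ((hI.prod isOpen_univ).mem_nhds ⟨ht, trivial⟩)
  have h1 := (hc.differentiableAt (by simp)).hasFDerivAt
  have h2 : HasDerivAt (fun s : ℝ => (s, x)) ((1 : ℝ), (0 : E6)) t :=
    (hasDerivAt_id t).prodMk (hasDerivAt_const t x)
  exact h1.comp_hasDerivAt t h2

theorem slice_x {I : Set ℝ} (hI : IsOpen I) {F : ℝ → E6 → ℂ}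
    (hF : ContDiffOn ℝ ∞ (fun p : ℝ × E6 => F p.1 p.2) (I ×ˢ Set.univ)) {t} (ht : t ∈ I) (x : E6)
    (j : Fin 6) :
    pd (F t) j x
      = fderiv ℝ (fun p : ℝ × E6 => F p.1 p.2) (t, x) (0, EuclideanSpace.single j 1) := by
  have hc : ContDiffAt ℝ ∞ (fun p : ℝ × E6 => F p.1 p.2) (t, x) :=
    hF.contDiffAt ((hI.prod isOpen_univ).mem_nhds ⟨ht, trivial⟩)
  have h1 := (hc.differentiableAt (by simp)).hasFDerivAt
  have h2 : HasFDerivAt (fun y : E6 => (t, y)) (ContinuousLinearMap.inr ℝ ℝ E6) x :=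
    hasFDerivAt_prodMk_right t x
  have h3 : HasFDerivAt (F t) _ x := h1.comp x h2
  unfold pd
  rw [h3.fderiv]
  simp

theorem time_pd {I : Set ℝ} (hI : IsOpen I) {F : ℝ → E6 → ℂ}
    (hF : ContDiffOn ℝ ∞ (fun p : ℝ × E6 => F p.1 p.2) (I ×ˢ Set.univ)) {t} (ht : t ∈ I) (x : E6)
    (j : Fin 6) :
    HasDerivAt (fun s => pd (F s) j x) (pd (fun y => deriv (fun s => F s y) t) j x) t := by
  set Φ : ℝ × E6 → ℂ := fun p => F p.1 p.2 with hΦ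
  have hc : ContDiffAt ℝ ∞ Φ (t, x) :=
    hF.contDiffAt ((hI.prod isOpen_univ).mem_nhds ⟨ht, trivial⟩)
  have hs : IsSymmSndFDerivAt ℝ Φ (t, x) := hc.isSymmSndFDerivAt (by
    rw [minSmoothness_of_isRCLikeNormedField]
    have : ((2 : ℕ) : WithTop ℕ∞) ≤ ∞ := WithTop.coe_le_coe.2 le_top
    exact this)
  have hd : HasFDerivAt (fderiv ℝ Φ) (fderiv ℝ (fderiv ℝ Φ) (t, x)) (t, x) :=
    ((hc.fderiv_right (m := ∞) (by simp)).differentiableAt (by simp)).hasFDerivAt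
  have h2 : HasDerivAt (fun s : ℝ => (s, x)) ((1 : ℝ), (0 : E6)) t :=
    (hasDerivAt_id t).prodMk (hasDerivAt_const t x)
  have h2' : HasFDerivAt (fun y : E6 => (t, y)) (ContinuousLinearMap.inr ℝ ℝ E6) x :=
    hasFDerivAt_prodMk_right t x
  have e1 : HasDerivAt (fun s => fderiv ℝ Φ (s, x) (0, EuclideanSpace.single j 1))
      (fderiv ℝ (fderiv ℝ Φ) (t, x) (1, 0) (0, EuclideanSpace.single j 1)) t := by
    exact (ContinuousLinearMap.apply ℝ ℂ
      ((0, EuclideanSpace.single j 1) : ℝ × E6)).hasFDerivAt.comp_hasDerivAt t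
      (hd.comp_hasDerivAt t h2)
  have e2 : pd (fun y => deriv (fun s => F s y) t) j x
      = fderiv ℝ (fderiv ℝ Φ) (t, x) (0, EuclideanSpace.single j 1) (1, 0) := by
    have h4 : (fun y => deriv (fun s => F s y) t) = fun y => fderiv ℝ Φ (t, y) (1, 0) :=
      funext fun y => (slice_t hI hF ht y).deriv
    have h5 := (ContinuousLinearMap.apply ℝ ℂ ((1, 0) : ℝ × E6)).hasFDerivAt.comp x
      (hd.comp x h2')
    unfold pd
    rw [h4]
    have h6 : fderiv ℝ (fun y => fderiv ℝ Φ (t, y) (1, 0)) x = _ := h5.fderiv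
    rw [h6]
    simp
  rw [e2, hs.eq]
  refine e1.congr_of_eventuallyEq ?_
  filter_upwards [hI.mem_nhds ht] with s hs
  exact slice_x hI hF hs x j

theorem SB.int_eq {K R X Y Z} {L : E6 → ℂ} (hR : SB K R) (hX : SB K X) (hY : SB K Y) (hZ : SB K Z)
    {t} (ht : t ∈ K) (i j k : Fin 6)
    (h : ∀ x, L x = R t x + _root_.pd (X t) i x + _root_.pd (Y t) j x + _root_.pd (Z t) k x) :
    ∫ x, L x = ∫ x, R t x := by
  have i1 := hR.integrable ht
  have i2 := (hX.pd i).integrable ht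
  have i3 := (hY.pd j).integrable ht
  have i4 := (hZ.pd k).integrable ht
  rw [integral_congr_ae (Eventually.of_forall h)]
  refine (integral_add ((i1.add i2).add i3) i4).trans ?_
  rw [hZ.integral_pd ht, add_zero]
  refine (integral_add (i1.add i2) i3).trans ?_
  rw [hY.integral_pd ht, add_zero]
  refine (integral_add i1 i2).trans ?_
  rw [hX.integral_pd ht, add_zero]

def Lf (A w wb : E6 → ℂ) (j k : Fin 6) (x : E6) : ℂ :=
  (wb x * pd (pd (pd w k) k) j x - pd (pd wb k) k x * pd w j x
    + w x * pd (pd (pd wb k) k) j x - pd (pd w k) k x * pd wb j x) * pd A j x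

def Rf (A w wb : E6 → ℂ) (j k : Fin 6) (x : E6) : ℂ :=
  2 * ((pd wb j x * pd w k x + pd w j x * pd wb k x) * pd (pd A k) j x)
    - w x * wb x * pd (pd (pd (pd A j) j) k) k x

theorem SB.Lf {K w wb} {A : E6 → ℂ} (hA : Function.HasTemperateGrowth A) (hw : SB K w)
    (hb : SB K wb) (j k : Fin 6) : SB K (fun t => Lf A (w t) (wb t) j k) := by
  refine SB.mulTF ?_ ((TF.of hA).pd j)
  exact (((hb.mul (((hw.pd k).pd k).pd j)).sub (((hb.pd k).pd k).mul (hw.pd j))).add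
    (hw.mul (((hb.pd k).pd k).pd j))).sub (((hw.pd k).pd k).mul (hb.pd j))

theorem SB.Rf {K w wb} {A : E6 → ℂ} (hA : Function.HasTemperateGrowth A) (hw : SB K w)
    (hb : SB K wb) (j k : Fin 6) : SB K (fun t => Rf A (w t) (wb t) j k) := by
  refine SB.sub ?_ ?_
  · refine SB.cmul ?_ 2
    exact SB.mulTF (((hb.pd j).mul (hw.pd k)).add ((hw.pd j).mul (hb.pd k)))
      (((TF.of hA).pd k).pd j)
  · exact SB.mulTF (hw.mul hb) (((((TF.of hA).pd j).pd j).pd k).pd k)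

theorem lin_jk {K w wb} {A : E6 → ℂ} (hA : Function.HasTemperateGrowth A) (hw : SB K w)
    (hb : SB K wb) {t} (ht : t ∈ K) (j k : Fin 6) :
    ∫ x, Lf A (w t) (wb t) j k x = ∫ x, Rf A (w t) (wb t) j k x := by
  have hX : SB K (fun t x => (wb t x * pd (pd (w t) j) k x - pd (wb t) k x * pd (w t) j x
      + w t x * pd (pd (wb t) j) k x - pd (w t) k x * pd (wb t) j x) * pd A j x) := by
    refine SB.mulTF ?_ ((TF.of hA).pd j)
    exact (((hb.mul ((hw.pd j).pd k)).sub ((hb.pd k).mul (hw.pd j))).add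
      (hw.mul ((hb.pd j).pd k))).sub ((hw.pd k).mul (hb.pd j))
  have hY : SB K (fun t x => (wb t x * pd (w t) k x + w t x * pd (wb t) k x)
      * ((-1) * pd (pd A j) k x)) := by
    have h0 : SB K (fun t x => (-1) * (wb t x * pd (w t) k x + w t x * pd (wb t) k x)) :=
      ((hb.mul (hw.pd k)).add (hw.mul (hb.pd k))).cmul (-1)
    have := h0.mulTF (((TF.of hA).pd j).pd k)
    refine cast ?_ this
    congr 1
    funext t x
    ring
  have hZ : SB K (fun t x => (w t x * wb t x) * pd (pd (pd A j) j) k x) :=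
    SB.mulTF (hw.mul hb) ((((TF.of hA).pd j).pd j).pd k)
  refine (SB.Rf hA hw hb j k).int_eq hX hY hZ ht k j k fun x => ?_
  have h1 := hw.1 t ht
  have h2 := hb.1 t ht
  have h3 := hA.1
  have c1 : ∀ f : E6 → ℂ, ContDiff ℝ ∞ f → pd (pd (pd f k) k) j x = pd (pd (pd f j) k) k x := by
    intro f hf
    rw [pd_comm (contDiff_pd hf k) k j x, show pd (pd f k) j = pd (pd f j) k from
      funext fun y => pd_comm hf k j y]
  unfold Lf Rf
  rw [c1 _ h1, c1 _ h2, pd_comm h3 k j]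
  simp (disch := fun_prop) only [pd_mul, pd_add, pd_sub, pd_const]
  rw [pd_comm h1 k j, pd_comm h2 k j, pd_comm (contDiff_pd h3 j) k j]
  ring

theorem non_j {K N} {A : E6 → ℂ} (hA : Function.HasTemperateGrowth A) (hN : SB K N)
    {t} (ht : t ∈ K) (j : Fin 6) :
    ∫ x, pd (N t) j x * pd A j x = ∫ x, (-1) * (N t x * pd (pd A j) j x) := by
  refine ((hN.mulTF (((TF.of hA).pd j).pd j)).cmul (-1)).int_eq
    (hN.mulTF ((TF.of hA).pd j)) SB.zero SB.zero ht j j j fun x => ?_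
  have h1 := hN.1 t ht
  have h3 := hA.1
  simp (disch := fun_prop) only [pd_mul, pd_const]
  ring

def EV (K : Set ℝ) (F F' : ℝ → E6 → ℂ) : Prop :=
  (∀ s ∈ K, ∀ x, HasDerivAt (fun s => F s x) (F' s x) s) ∧
  ∀ s ∈ K, ∀ x j, HasDerivAt (fun s => pd (F s) j x) (pd (F' s) j x) s

theorem hasDerivAt_conj {f : ℝ → ℂ} {f' : ℂ} {t : ℝ} (h : HasDerivAt f f' t) :
    HasDerivAt (fun s => (starRingEnd ℂ) (f s)) ((starRingEnd ℂ) f') t :=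
  Complex.conjCLE.hasFDerivAt.comp_hasDerivAt t h

theorem EV.conj {K F F'} (hK : IsOpen K) (hF : SB K F) (hF' : SB K F') (h : EV K F F') :
    EV K (fun t x => (starRingEnd ℂ) (F t x)) (fun t x => (starRingEnd ℂ) (F' t x)) := by
  refine ⟨fun s hs x => hasDerivAt_conj (h.1 s hs x), fun s hs x j => ?_⟩
  rw [pd_conj (hF'.1 s hs)]
  refine (hasDerivAt_conj (h.2 s hs x j)).congr_of_eventuallyEq ?_
  filter_upwards [hK.mem_nhds hs] with r hr
  rw [pd_conj (hF.1 r hr)]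

def Pf (A u ub v vb : E6 → ℂ) (j : Fin 6) (x : E6) : ℂ :=
  (-Complex.I * (ub x * pd u j x - u x * pd ub j x)
    + (-Complex.I / 2) * (vb x * pd v j x - v x * pd vb j x)) * pd A j x

def Hf (A u ub v vb : E6 → ℂ) (x : E6) : ℂ :=
  ∑ j, (∑ k, (Rf A u ub j k x + (1 / 4) * Rf A v vb j k x)
    + (1 / 2) * ((-1) * ((vb x * (u x * u x) + v x * (ub x * ub x)) * pd (pd A j) j x)))

theorem core {K : Set ℝ} {u ub v vb : ℝ → E6 → ℂ} {A : E6 → ℂ}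
    (hA : Function.HasTemperateGrowth A)
    (hu : SB K u) (hub : SB K ub) (hv : SB K v) (hvb : SB K vb)
    (eu : EV K u (fun t x => Complex.I * (lap (u t) x + v t x * ub t x)))
    (eub : EV K ub (fun t x => -Complex.I * (lap (ub t) x + vb t x * u t x)))
    (ev : EV K v (fun t x => Complex.I * (1 / 2 * lap (v t) x + u t x * u t x)))
    (evb : EV K vb (fun t x => -Complex.I * (1 / 2 * lap (vb t) x + ub t x * ub t x)))
    {t : ℝ} (ht : K ∈ nhds t) :
    HasDerivAt (fun s => ∫ x, (u s x * ub s x + v s x * vb s x) * A x)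
      (∫ x, ∑ j, Pf A (u t) (ub t) (v t) (vb t) j x) t ∧
    HasDerivAt (fun s => ∫ x, ∑ j, Pf A (u s) (ub s) (v s) (vb s) j x)
      (∫ x, Hf A (u t) (ub t) (v t) (vb t) x) t := by
  have htK := mem_of_mem_nhds ht
  have sut : SB K (fun t x => Complex.I * (lap (u t) x + v t x * ub t x)) :=
    (hu.lap.add (hv.mul hub)).cmul _
  have subt : SB K (fun t x => -Complex.I * (lap (ub t) x + vb t x * u t x)) :=
    (hub.lap.add (hvb.mul hu)).cmul _
  have svt : SB K (fun t x => Complex.I * (1 / 2 * lap (v t) x + u t x * u t x)) :=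
    ((hv.lap.cmul _).add (hu.mul hu)).cmul _
  have svbt : SB K (fun t x => -Complex.I * (1 / 2 * lap (vb t) x + ub t x * ub t x)) :=
    ((hvb.lap.cmul _).add (hub.mul hub)).cmul _
  have hI2 : Complex.I * Complex.I = -1 := Complex.I_mul_I
  have hJ : ∀ j, SB K (fun t x => -Complex.I * (ub t x * pd (u t) j x - u t x * pd (ub t) j x)
    + (-Complex.I / 2) * (vb t x * pd (v t) j x - v t x * pd (vb t) j x)) := fun j =>
    (((hub.mul (hu.pd j)).sub (hu.mul (hub.pd j))).cmul _).add
      (((hvb.mul (hv.pd j)).sub (hv.mul (hvb.pd j))).cmul _)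
  have hP : ∀ j, SB K (fun t => Pf A (u t) (ub t) (v t) (vb t) j) := fun j =>
    (hJ j).mulTF ((TF.of hA).pd j)
  constructor
  · have h1 := SB.hasDerivAt
      (((hu.mul hub).add (hv.mul hvb)).mulTF (TF.of hA))
      ((((sut.mul hub).add (hu.mul subt)).add ((svt.mul hvb).add (hv.mul svbt))).mulTF (TF.of hA))
      ht (fun s hs x =>
        ((((eu.1 s hs x).mul (eub.1 s hs x)).add ((ev.1 s hs x).mul (evb.1 s hs x))).mul_const _))
    refine h1.congr_deriv ?_
    have hm : ∀ j, SB K (fun t x => -1 * ((-Complex.I * (ub t x * pd (u t) j x - u t x * pd (ub t) j x)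
      + (-Complex.I / 2) * (vb t x * pd (v t) j x - v t x * pd (vb t) j x)) * A x)) := fun j =>
      ((hJ j).mulTF (TF.of hA)).cmul _
    have key : ∀ x, (Complex.I * (lap (u t) x + v t x * ub t x) * ub t x
        + u t x * (-Complex.I * (lap (ub t) x + vb t x * u t x))
        + (Complex.I * (1 / 2 * lap (v t) x + u t x * u t x) * vb t x
        + v t x * (-Complex.I * (1 / 2 * lap (vb t) x + ub t x * ub t x)))) * A x
        = ∑ j, (Pf A (u t) (ub t) (v t) (vb t) j x +
          pd (fun x => -1 * ((-Complex.I * (ub t x * pd (u t) j x - u t x * pd (ub t) j x)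
      + (-Complex.I / 2) * (vb t x * pd (v t) j x - v t x * pd (vb t) j x)) * A x)) j x) := by
      intro x
      have c1 := hu.1 t htK
      have c2 := hub.1 t htK
      have c3 := hv.1 t htK
      have c4 := hvb.1 t htK
      have c5 := hA.1
      have : ∀ j, (Pf A (u t) (ub t) (v t) (vb t) j x +
          pd (fun x => -1 * ((-Complex.I * (ub t x * pd (u t) j x - u t x * pd (ub t) j x)
      + (-Complex.I / 2) * (vb t x * pd (v t) j x - v t x * pd (vb t) j x)) * A x)) j x)
        = (Complex.I * ub t x * A x) * pd (pd (u t) j) j x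
          - (Complex.I * u t x * A x) * pd (pd (ub t) j) j x
          + (Complex.I / 2 * vb t x * A x) * pd (pd (v t) j) j x
          - (Complex.I / 2 * v t x * A x) * pd (pd (vb t) j) j x := by
        intro j
        simp (disch := fun_prop) only [pd_mul, pd_add, pd_sub, pd_const]
        unfold Pf
        ring
      simp only [this, Finset.sum_add_distrib, Finset.sum_sub_distrib, ← Finset.mul_sum]
      simp only [← lap_eq]
      ring
    rw [integral_congr_ae (Eventually.of_forall key),
      integral_finsetSum _ (fun j _ => ((hP j).add ((hm j).pd j)).integrable htK),
      integral_finsetSum _ (fun j _ => (hP j).integrable htK)]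
    refine Finset.sum_congr rfl fun j _ => ?_
    have := integral_add ((hP j).integrable htK) (((hm j).pd j).integrable htK)
    refine this.trans ?_
    rw [(hm j).integral_pd htK j, add_zero]
  · have hP' : ∀ j, SB K (fun t x =>
        (-Complex.I * ((-Complex.I * (lap (ub t) x + vb t x * u t x)) * pd (u t) j x
            + ub t x * pd (fun x => Complex.I * (lap (u t) x + v t x * ub t x)) j x
          - ((Complex.I * (lap (u t) x + v t x * ub t x)) * pd (ub t) j x
            + u t x * pd (fun x => -Complex.I * (lap (ub t) x + vb t x * u t x)) j x))
        + (-Complex.I / 2) *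
          ((-Complex.I * (1 / 2 * lap (vb t) x + ub t x * ub t x)) * pd (v t) j x
            + vb t x * pd (fun x => Complex.I * (1 / 2 * lap (v t) x + u t x * u t x)) j x
          - ((Complex.I * (1 / 2 * lap (v t) x + u t x * u t x)) * pd (vb t) j x
            + v t x * pd (fun x => -Complex.I * (1 / 2 * lap (vb t) x + ub t x * ub t x)) j x)))
        * pd A j x) := by
      intro j
      refine SB.mulTF ?_ ((TF.of hA).pd j)
      refine SB.add (SB.cmul ?_ _) (SB.cmul ?_ _)
      · exact ((subt.mul (hu.pd j)).add (hub.mul (sut.pd j))).sub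
          ((sut.mul (hub.pd j)).add (hu.mul (subt.pd j)))
      · exact ((svbt.mul (hv.pd j)).add (hvb.mul (svt.pd j))).sub
          ((svt.mul (hvb.pd j)).add (hv.mul (svbt.pd j)))
    have h1 := SB.hasDerivAt (SB.sum hP) (SB.sum hP') ht (fun s hs x => by
      refine HasDerivAt.fun_sum fun j _ => ?_
      refine HasDerivAt.mul_const ?_ _
      refine HasDerivAt.add (HasDerivAt.const_mul _ ?_) (HasDerivAt.const_mul _ ?_)
      · exact ((eub.1 s hs x).mul (eu.2 s hs x j)).sub ((eu.1 s hs x).mul (eub.2 s hs x j))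
      · exact ((evb.1 s hs x).mul (ev.2 s hs x j)).sub ((ev.1 s hs x).mul (evb.2 s hs x j)))
    refine h1.congr_deriv ?_
    have hN : SB K (fun t x => vb t x * (u t x * u t x) + v t x * (ub t x * ub t x)) :=
      (hvb.mul (hu.mul hu)).add (hv.mul (hub.mul hub))
    unfold Hf
    rw [integral_finsetSum _ (fun j _ => (hP' j).integrable htK),
      integral_finsetSum]
    swap
    · intro j _
      exact SB.integrable (K := K) (F := fun t x => _) ((SB.sum fun k => (SB.Rf hA hu hub j k).add
        ((SB.Rf hA hv hvb j k).cmul (1 / 4))).add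
        (((hN.mulTF (((TF.of hA).pd j).pd j)).cmul (-1)).cmul (1 / 2))) htK
    refine Finset.sum_congr rfl fun j _ => ?_
    have key : ∀ x, (-Complex.I * ((-Complex.I * (lap (ub t) x + vb t x * u t x)) * pd (u t) j x
            + ub t x * pd (fun x => Complex.I * (lap (u t) x + v t x * ub t x)) j x
          - ((Complex.I * (lap (u t) x + v t x * ub t x)) * pd (ub t) j x
            + u t x * pd (fun x => -Complex.I * (lap (ub t) x + vb t x * u t x)) j x))
        + (-Complex.I / 2) *
          ((-Complex.I * (1 / 2 * lap (vb t) x + ub t x * ub t x)) * pd (v t) j x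
            + vb t x * pd (fun x => Complex.I * (1 / 2 * lap (v t) x + u t x * u t x)) j x
          - ((Complex.I * (1 / 2 * lap (v t) x + u t x * u t x)) * pd (vb t) j x
            + v t x * pd (fun x => -Complex.I * (1 / 2 * lap (vb t) x + ub t x * ub t x)) j x)))
        * pd A j x
        = ∑ k, (Lf A (u t) (ub t) j k x + (1 / 4) * Lf A (v t) (vb t) j k x)
          + (1 / 2) * (pd (fun x => vb t x * (u t x * u t x) + v t x * (ub t x * ub t x)) j x
            * pd A j x) := by
      intro x
      have c1 := hu.1 t htK
      have c2 := hub.1 t htK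
      have c3 := hv.1 t htK
      have c4 := hvb.1 t htK
      have c5 := hA.1
      have d1 : ContDiff ℝ ∞ (lap (u t)) := hu.lap.1 t htK
      have d2 : ContDiff ℝ ∞ (lap (ub t)) := hub.lap.1 t htK
      have d3 : ContDiff ℝ ∞ (lap (v t)) := hv.lap.1 t htK
      have d4 : ContDiff ℝ ∞ (lap (vb t)) := hvb.lap.1 t htK
      have pl : ∀ f : E6 → ℂ, ContDiff ℝ ∞ f → pd (lap f) j x = ∑ k, pd (pd (pd f k) k) j x :=
        fun f hf => pd_sum (f := fun k => pd (pd f k) k)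
          (fun k => contDiff_pd (contDiff_pd hf k) k) j x
      have hL : ∀ f g : E6 → ℂ, ContDiff ℝ ∞ f → ContDiff ℝ ∞ g → ∑ k, Lf A f g j k x
          = (g x * pd (lap f) j x - lap g x * pd f j x + f x * pd (lap g) j x
            - lap f x * pd g j x) * pd A j x := by
        intro f g hf hg
        rw [pl f hf, pl g hg, lap_eq, lap_eq]
        unfold Lf
        simp only [Finset.sum_add_distrib, Finset.sum_sub_distrib, ← Finset.mul_sum,
          ← Finset.sum_mul]
      rw [Finset.sum_add_distrib, ← Finset.mul_sum, hL _ _ c1 c2, hL _ _ c3 c4]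
      generalize lap (u t) = lu at *
      generalize lap (ub t) = lub at *
      generalize lap (v t) = lv at *
      generalize lap (vb t) = lvb at *
      simp (disch := fun_prop) only [pd_mul, pd_add, pd_const]
      ring_nf
      simp only [Complex.I_sq]
      ring
    rw [integral_congr_ae (Eventually.of_forall key)]
    have iL : ∀ k, SB K (fun t x => Lf A (u t) (ub t) j k x + (1 / 4) * Lf A (v t) (vb t) j k x) :=
      fun k => (SB.Lf hA hu hub j k).add ((SB.Lf hA hv hvb j k).cmul (1 / 4))
    have iR : ∀ k, SB K (fun t x => Rf A (u t) (ub t) j k x + (1 / 4) * Rf A (v t) (vb t) j k x) :=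
      fun k => (SB.Rf hA hu hub j k).add ((SB.Rf hA hv hvb j k).cmul (1 / 4))
    rw [integral_add ((SB.sum iL).integrable htK)
        ((((hN.pd j).mulTF ((TF.of hA).pd j)).cmul (1 / 2)).integrable htK),
      integral_add ((SB.sum iR).integrable htK)
        ((((hN.mulTF (((TF.of hA).pd j).pd j)).cmul (-1)).cmul (1 / 2)).integrable htK),
      integral_const_mul (1 / 2 : ℂ), integral_const_mul (1 / 2 : ℂ), non_j hA hN htK j,
      integral_finsetSum _ (fun k _ => (iL k).integrable htK),
      integral_finsetSum _ (fun k _ => (iR k).integrable htK)]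
    congr 1
    refine Finset.sum_congr rfl fun k _ => ?_
    rw [integral_add ((SB.Lf hA hu hub j k).integrable htK)
        (((SB.Lf hA hv hvb j k).cmul (1 / 4)).integrable htK),
      integral_add ((SB.Rf hA hu hub j k).integrable htK)
        (((SB.Rf hA hv hvb j k).cmul (1 / 4)).integrable htK),
      integral_const_mul, integral_const_mul, lin_jk hA hu hub htK, lin_jk hA hv hvb htK]

theorem re_Hf {a : E6 → ℝ} (ha : ContDiff ℝ ∞ a) (u v : E6 → ℂ)
    (hu : ContDiff ℝ ∞ u) (hv : ContDiff ℝ ∞ v) (x : E6) :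
    (Hf (fun y => (a y : ℂ)) u (fun y => (starRingEnd ℂ) (u y)) v
      (fun y => (starRingEnd ℂ) (v y)) x).re
    = 4 * (∑ j : Fin 6, ∑ k : Fin 6,
              ((starRingEnd ℂ) (pd u j x) * pd u k x
                + (1 / 4 : ℂ) * (starRingEnd ℂ) (pd v j x) * pd v k x)
                * ((pd2R a j k x : ℝ) : ℂ)).re
      - (‖u x‖ ^ 2 + (1 / 4) * ‖v x‖ ^ 2) * lapR (lapR a) x
      - ((starRingEnd ℂ) (v x) * (u x) ^ 2 * ((lapR a x : ℝ) : ℂ)).re := by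
  have p2 : ∀ j k, pd (pd (fun y => (a y : ℂ)) k) j x = ((pd2R a j k x : ℝ) : ℂ) := by
    intro j k
    rw [pd_ofReal ha, pd_ofReal (contDiff_pdR ha k)]
    rfl
  have p4 : ∀ j k, pd (pd (pd (pd (fun y => (a y : ℂ)) j) j) k) k x
      = ((pdR (pdR (pdR (pdR a j) j) k) k x : ℝ) : ℂ) := by
    intro j k
    rw [pd_ofReal ha, pd_ofReal (contDiff_pdR ha j), pd_ofReal (contDiff_pdR (contDiff_pdR ha j) j),
      pd_ofReal (contDiff_pdR (contDiff_pdR (contDiff_pdR ha j) j) k)]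
  have l1 : lapR a x = ∑ j, pd2R a j j x := rfl
  have l2 : lapR (lapR a) x = ∑ j, ∑ k, pdR (pdR (pdR (pdR a j) j) k) k x := by
    have hc := lap_ofReal (contDiff_lapR ha)
    rw [← lap_ofReal ha] at hc
    have hc := congrFun hc x
    apply Complex.ofReal_injective
    rw [← hc, lap_eq, Finset.sum_comm]
    push_cast
    refine Finset.sum_congr rfl fun k _ => ?_
    have e1 : pd (lap fun y => (a y : ℂ)) k = fun z => ∑ j, pd (pd (pd (fun y => (a y : ℂ)) j) j) k z := by
      funext z
      have hA : ContDiff ℝ ∞ (fun y => (a y : ℂ)) := Complex.ofRealCLM.contDiff.comp ha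
      exact pd_sum (f := fun j => pd (pd (fun y => (a y : ℂ)) j) j)
        (fun j => contDiff_pd (contDiff_pd hA j) j) k z
    have hA : ContDiff ℝ ∞ (fun y => (a y : ℂ)) := Complex.ofRealCLM.contDiff.comp ha
    rw [e1, pd_sum (fun j => contDiff_pd (contDiff_pd (contDiff_pd hA j) j) k)]
    exact Finset.sum_congr rfl fun j _ => p4 j k
  have n1 : ∀ z : ℂ, ‖z‖ ^ 2 = z.re ^ 2 + z.im ^ 2 := fun z => by
    rw [Complex.sq_norm, Complex.normSq_apply]; ring
  unfold Hf Rf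
  simp only [p2, p4, pd_conj hu, pd_conj hv, l1, l2]
  simp only [Complex.re_sum, Finset.mul_sum, Complex.ofReal_sum]
  rw [← Finset.sum_sub_distrib, ← Finset.sum_sub_distrib]
  refine Finset.sum_congr rfl fun j _ => ?_
  simp only [Complex.add_re (∑ _, _), Complex.re_sum]
  rw [← Finset.sum_sub_distrib, sub_eq_add_neg]
  congr 1
  · refine Finset.sum_congr rfl fun k _ => ?_
    rw [n1, n1]
    simp [pow_two]
    ring
  · simp [pow_two]
    ring

/-- second Virial identity. For a classical solution of the mass-resonance
(`κ = 1/2`) quadratic NLS system and a smooth polynomially growing weight `a`,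
`(d²/dt²) ∫ (|u|²+|v|²) a = 4 Re ∫ Σ_{j,k} (∂_j conj(u) ∂_k u + (1/4) ∂_j conj(v) ∂_k v) ∂_j∂_k a`
`− ∫ (|u|² + (1/4)|v|²) Δ²a − Re ∫ conj(v) u² Δa`. -/
theorem virial_second (I : Set ℝ) (hI : IsOpen I) (u v : ℝ → E6 → ℂ)
    (hsol : IsClassicalSol (1 / 2) I u v)
    (a : E6 → ℝ) (ha : Function.HasTemperateGrowth a) :
    ∀ t ∈ I,
      deriv (deriv (fun s => ∫ x : E6, (‖u s x‖ ^ 2 + ‖v s x‖ ^ 2) * a x)) t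
        = 4 * (∫ x : E6, ∑ j : Fin 6, ∑ k : Fin 6,
              ((starRingEnd ℂ) (pd (u t) j x) * pd (u t) k x
                + (1 / 4 : ℂ) * (starRingEnd ℂ) (pd (v t) j x) * pd (v t) k x)
                * ((pd2R a j k x : ℝ) : ℂ)).re
          - (∫ x : E6, (‖u t x‖ ^ 2 + (1 / 4) * ‖v t x‖ ^ 2) * lapR (lapR a) x)
          - (∫ x : E6, (starRingEnd ℂ) (v t x) * (u t x) ^ 2 * ((lapR a x : ℝ) : ℂ)).re := by

  intro t ht
  obtain ⟨ε, hε, hεI⟩ := Metric.nhds_basis_closedBall.mem_iff.1 (hI.mem_nhds ht)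
  set K := Metric.ball t ε with hK
  have hKI : K ⊆ I := Metric.ball_subset_closedBall.trans hεI
  have hKo : IsOpen K := Metric.isOpen_ball
  have htK : t ∈ K := Metric.mem_ball_self hε
  have hb := hsol.bounds (Metric.closedBall t ε) hεI (isCompact_closedBall t ε)
  have hu : SB K u := ⟨fun s hs => (hsol.schwartz_u s (hKI hs)).1, fun k n => by
    obtain ⟨C, hC⟩ := hb k n
    exact ⟨C, fun s hs x => (hC s (Metric.ball_subset_closedBall hs) x).1⟩⟩
  have hv : SB K v := ⟨fun s hs => (hsol.schwartz_v s (hKI hs)).1, fun k n => by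
    obtain ⟨C, hC⟩ := hb k n
    exact ⟨C, fun s hs x => (hC s (Metric.ball_subset_closedBall hs) x).2⟩⟩
  have cu : ContDiffOn ℝ ∞ (fun p : ℝ × E6 => u p.1 p.2) (I ×ˢ Set.univ) :=
    contDiff_fst.comp_contDiffOn hsol.smooth
  have cv : ContDiffOn ℝ ∞ (fun p : ℝ × E6 => v p.1 p.2) (I ×ˢ Set.univ) :=
    contDiff_snd.comp_contDiffOn hsol.smooth
  have du : ∀ s ∈ I, ∀ x, deriv (fun s => u s x) s
      = Complex.I * (lap (u s) x + v s x * (starRingEnd ℂ) (u s x)) := by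
    intro s hs x
    have h := hsol.eqn_u s hs x
    linear_combination (-Complex.I) * h + (deriv (fun s => u s x) s) * Complex.I_sq
  have dv : ∀ s ∈ I, ∀ x, deriv (fun s => v s x) s
      = Complex.I * (1 / 2 * lap (v s) x + u s x * u s x) := by
    intro s hs x
    have h := hsol.eqn_v s hs x
    push_cast at h
    linear_combination (-Complex.I) * h + (deriv (fun s => v s x) s) * Complex.I_sq
  have eu : EV K u (fun t x => Complex.I * (lap (u t) x + v t x * (starRingEnd ℂ) (u t x))) := by
    refine ⟨fun s hs x => ?_, fun s hs x j => ?_⟩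
    · refine HasDerivAt.congr_deriv ?_ (du s (hKI hs) x)
      exact (slice_t hI cu (hKI hs) x).differentiableAt.hasDerivAt
    · have := time_pd hI cu (hKI hs) x j
      rwa [funext (du s (hKI hs))] at this
  have ev : EV K v (fun t x => Complex.I * (1 / 2 * lap (v t) x + u t x * u t x)) := by
    refine ⟨fun s hs x => ?_, fun s hs x j => ?_⟩
    · refine HasDerivAt.congr_deriv ?_ (dv s (hKI hs) x)
      exact (slice_t hI cv (hKI hs) x).differentiableAt.hasDerivAt
    · have := time_pd hI cv (hKI hs) x j
      rwa [funext (dv s (hKI hs))] at this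
  have sut : SB K (fun t x => Complex.I * (lap (u t) x + v t x * (starRingEnd ℂ) (u t x))) :=
    (hu.lap.add (hv.mul hu.conj)).cmul _
  have svt : SB K (fun t x => Complex.I * (1 / 2 * lap (v t) x + u t x * u t x)) :=
    ((hv.lap.cmul _).add (hu.mul hu)).cmul _
  have congrEV : ∀ {F G G' : ℝ → E6 → ℂ}, EV K F G → (∀ s ∈ K, G s = G' s) → EV K F G' := by
    intro F G G' h hG
    refine ⟨fun s hs x => ?_, fun s hs x j => ?_⟩
    · rw [← hG s hs]; exact h.1 s hs x
    · rw [← hG s hs]; exact h.2 s hs x j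
  have eub : EV K (fun t x => (starRingEnd ℂ) (u t x)) (fun t x => -Complex.I *
      (lap (fun x => (starRingEnd ℂ) (u t x)) x + (starRingEnd ℂ) (v t x) * u t x)) := by
    refine congrEV (eu.conj hKo hu sut) fun s hs => funext fun x => ?_
    simp [lap_conj (hu.1 s hs)]
  have evb : EV K (fun t x => (starRingEnd ℂ) (v t x)) (fun t x => -Complex.I *
      (1 / 2 * lap (fun x => (starRingEnd ℂ) (v t x)) x
        + (starRingEnd ℂ) (u t x) * (starRingEnd ℂ) (u t x))) := by
    refine congrEV (ev.conj hKo hv svt) fun s hs => funext fun x => ?_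
    have c2 : (starRingEnd ℂ) 2 = 2 := Complex.conj_ofNat 2
    simp [lap_conj (hv.1 s hs), c2]
  have hA : Function.HasTemperateGrowth (fun x => (a x : ℂ)) :=
    Function.HasTemperateGrowth.comp Function.Complex.hasTemperateGrowth_ofReal ha
  have hcore := fun s (hs : s ∈ K) => core hA hu hu.conj hv hv.conj eu eub ev evb
    (hKo.mem_nhds hs)
  have hM : (fun s => ∫ x : E6, (‖u s x‖ ^ 2 + ‖v s x‖ ^ 2) * a x) = fun s =>
      (∫ x, (u s x * (starRingEnd ℂ) (u s x) + v s x * (starRingEnd ℂ) (v s x)) * (a x : ℂ)).re := by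
    funext s
    have : ∀ x, (u s x * (starRingEnd ℂ) (u s x) + v s x * (starRingEnd ℂ) (v s x)) * (a x : ℂ)
        = (((‖u s x‖ ^ 2 + ‖v s x‖ ^ 2) * a x : ℝ) : ℂ) := by
      intro x
      rw [Complex.mul_conj', Complex.mul_conj']
      push_cast; rfl
    rw [integral_congr_ae (Eventually.of_forall this), integral_complex_ofReal, Complex.ofReal_re]
  have hre : ∀ {f : ℝ → ℂ} {f' : ℂ} {s : ℝ}, HasDerivAt f f' s →
      HasDerivAt (fun r => (f r).re) f'.re s := fun h =>
    Complex.reCLM.hasFDerivAt.comp_hasDerivAt _ h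
  rw [hM]
  have hev : deriv (fun s =>
      (∫ x, (u s x * (starRingEnd ℂ) (u s x) + v s x * (starRingEnd ℂ) (v s x)) * (a x : ℂ)).re)
      =ᶠ[nhds t] fun s => (∫ x, ∑ j, Pf (fun x => (a x : ℂ)) (u s)
        (fun x => (starRingEnd ℂ) (u s x)) (v s) (fun x => (starRingEnd ℂ) (v s x)) j x).re := by
    filter_upwards [hKo.mem_nhds htK] with s hs
    exact (hre (hcore s hs).1).deriv
  rw [hev.deriv_eq, (hre (hcore t htK).2).deriv]
  have i1 : SB K (fun t x => ∑ j : Fin 6, ∑ k : Fin 6,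
              ((starRingEnd ℂ) (pd (u t) j x) * pd (u t) k x
                + (1 / 4 : ℂ) * (starRingEnd ℂ) (pd (v t) j x) * pd (v t) k x)
                * ((pd2R a j k x : ℝ) : ℂ)) := by
    refine SB.sum fun j => SB.sum fun k => SB.mulTF ?_ ?_
    · exact ((hu.pd j).conj.mul (hu.pd k)).add (((hv.pd j).conj.cmul (1 / 4)).mul (hv.pd k))
    · have := ((TF.of (K := K) hA).pd k).pd j
      rw [pd_ofReal ha.1, pd_ofReal (contDiff_pdR ha.1 k)] at this
      exact this
  have tl : ∀ {b : E6 → ℝ}, TF K (fun _ x => (b x : ℂ)) → ContDiff ℝ ∞ b →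
      ∀ j, TF K (fun _ x => (pdR b j x : ℂ)) := by
    intro b hb hc j
    have := hb.pd j
    rwa [pd_ofReal hc] at this
  have i3 : SB K (fun t x => (starRingEnd ℂ) (v t x) * (u t x) ^ 2 * ((lapR a x : ℝ) : ℂ)) := by
    have : SB K (fun t x => ∑ j, ((starRingEnd ℂ) (v t x) * (u t x * u t x))
        * ((pdR (pdR a j) j x : ℝ) : ℂ)) := SB.sum fun j => SB.mulTF (hv.conj.mul (hu.mul hu))
      (tl (tl (TF.of hA) ha.1 j) (contDiff_pdR ha.1 j) j)
    refine cast ?_ this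
    congr 1
    funext t x
    have : lapR a x = ∑ j, pdR (pdR a j) j x := rfl
    rw [this, Complex.ofReal_sum, Finset.mul_sum, pow_two]
  have i4 : SB K (fun t => Hf (fun x => (a x : ℂ)) (u t)
        (fun x => (starRingEnd ℂ) (u t x)) (v t) (fun x => (starRingEnd ℂ) (v t x))) := by
    refine SB.sum fun j => SB.add (SB.sum fun k => (SB.Rf hA hu hu.conj j k).add
        ((SB.Rf hA hv hv.conj j k).cmul (1 / 4))) ?_
    exact (((((hv.conj.mul (hu.mul hu)).add (hv.mul (hu.conj.mul hu.conj))).mulTF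
      (((TF.of hA).pd j).pd j)).cmul (-1)).cmul (1 / 2))
  have r1 := i1.integrable htK
  have r3 := i3.integrable htK
  have r4 := i4.integrable htK
  have hR := re_Hf ha.1 (u t) (v t) (hu.1 t htK) (hv.1 t htK)
  have e1 := Complex.reCLM.integral_comp_comm r1
  have e3 := Complex.reCLM.integral_comp_comm r3
  have e4 := Complex.reCLM.integral_comp_comm r4
  have q1 := Complex.reCLM.integrable_comp r1
  have q3 := Complex.reCLM.integrable_comp r3
  have q4 := Complex.reCLM.integrable_comp r4
  simp only [Complex.reCLM_apply] at e1 e3 e4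
  rw [← e1, ← e3, ← e4]
  have q2 : Integrable (fun x => (‖u t x‖ ^ 2 + (1 / 4) * ‖v t x‖ ^ 2) * lapR (lapR a) x) := by
    refine (((q1.const_mul 4).sub q3).sub q4).congr (Eventually.of_forall fun x => ?_)
    have := hR x
    simp only [Pi.sub_apply, Complex.reCLM_apply]
    linarith
  rw [integral_congr_ae (Eventually.of_forall hR)]
  refine (integral_sub ((q1.const_mul 4).sub q2) q3).trans ?_
  congr 1
  refine (integral_sub (q1.const_mul 4) q2).trans ?_
  congr 1
  exact integral_const_mul _ _
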